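/- (Zassenhaus grading element) Let g = ⊕_{i ∈ ℤ} g^i be a finite-dimensional semisimple ℤ-graded Lie algebra over a field of characteristic zero, with bracket-compatible grading. Then there exists a unique element x ∈ g^0 such that [x, y] = i·y for all y ∈ g^i and all i. -/

import Mathlib

/-- Zassenhaus grading element: A finite-dimensional semisimple
ℤ-graded Lie algebra over a characteristic-zero field has a unique element `x ∈ g⁰`
with `[x, y] = i • y` for all `y ∈ gⁱ` and all `i`. -/
theorem exists_unique_grading_element
    {K L : Type*} [Field K] [CharZero K] [LieRing L] [LieAlgebra K L]
    [FiniteDimensional K L] [LieAlgebra.IsSemisimple K L]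
    (G : ℤ → Submodule K L)
    (hG : DirectSum.IsInternal G)
    (hbr : ∀ i j : ℤ, ∀ x ∈ G i, ∀ y ∈ G j, ⁅x, y⁆ ∈ G (i + j)) :
    ∃! x : L, x ∈ G 0 ∧ ∀ i : ℤ, ∀ y ∈ G i, ⁅x, y⁆ = i • y := by
  classical
  have htop : ∀ z : L, z ∈ ⨆ i, G i := by
    intro z
    rw [hG.submodule_iSup_eq_top]
    trivial
  let e := LinearEquiv.ofBijective (DirectSum.coeLinearMap G) hG
  let M : (DirectSum ℤ fun i => G i) →ₗ[K] (DirectSum ℤ fun i => G i) :=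
    DFinsupp.mapRange.linearMap (fun i : ℤ => (i : K) • (LinearMap.id : G i →ₗ[K] G i))
  let D : L →ₗ[K] L := e.toLinearMap ∘ₗ M ∘ₗ e.symm.toLinearMap
  have he : ∀ (i : ℤ) (y : L) (hy : y ∈ G i),
      e (DirectSum.lof K ℤ (fun i => G i) i ⟨y, hy⟩) = y := by
    intro i y hy
    exact DirectSum.coeLinearMap_lof G i ⟨y, hy⟩
  have hD : ∀ (i : ℤ) (y : L), y ∈ G i → D y = (i : K) • y := by
    intro i y hy
    have h1 : e.symm y = DirectSum.lof K ℤ (fun i => G i) i ⟨y, hy⟩ := by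
      rw [LinearEquiv.symm_apply_eq, he]
    have h2 : M (DirectSum.lof K ℤ (fun i => G i) i ⟨y, hy⟩)
        = (i : K) • DirectSum.lof K ℤ (fun i => G i) i ⟨y, hy⟩ := by
      rw [← map_smul]
      exact DFinsupp.mapRange_single (hf := fun i => map_zero _)
    change e (M (e.symm y)) = _
    rw [h1, h2, map_smul, he]
  have hleib : ∀ a b : L, D ⁅a, b⁆ = ⁅a, D b⁆ - ⁅b, D a⁆ := by
    intro a b
    induction htop a using Submodule.iSup_induction' with
    | zero => simp
    | add a a' _ _ h h' => simp only [add_lie, lie_add, map_add, h, h']; abel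
    | mem i a ha =>
      induction htop b using Submodule.iSup_induction' with
      | zero => simp
      | add b b' _ _ h h' => simp only [add_lie, lie_add, map_add, h, h']; abel
      | mem j b hb =>
        rw [hD _ _ (hbr i j a ha b hb), hD i a ha, hD j b hb, lie_smul, lie_smul,
          ← lie_skew a b, Int.cast_add, add_smul]
        simp only [smul_neg]
        abel
  obtain ⟨x, hx⟩ := LieDerivation.IsKilling.exists_eq_ad (⟨D, hleib⟩ : LieDerivation K L L)
  have hxD : ∀ y, ⁅x, y⁆ = D y := fun y => by
    have := congrArg (fun d : LieDerivation K L L => d y) hx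
    simpa using this
  refine ⟨x, ⟨?_, ?_⟩, ?_⟩
  · have h0 : e (M (e.symm x)) = 0 := by
      have := hxD x
      rw [lie_self] at this
      exact this.symm
    have h1 : M (e.symm x) = 0 := by simpa using h0
    have h2 : ∀ i : ℤ, i ≠ 0 → e.symm x i = 0 := by
      intro i hi
      have h3 : (i : K) • (e.symm x i) = 0 := DFunLike.congr_fun h1 i
      exact (smul_eq_zero.mp h3).resolve_left (by exact_mod_cast hi)
    have h4 : e.symm x = DirectSum.lof K ℤ (fun i => G i) 0 (e.symm x 0) := by
      ext i
      by_cases hi : i = 0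
      · subst hi; simp [DirectSum.lof_eq_of]
      · rw [h2 i hi, DirectSum.lof_eq_of, DirectSum.of_eq_of_ne _ _ _ hi]
    have h5 : x = (e.symm x 0 : L) := by
      rw [LinearEquiv.symm_apply_eq] at h4
      exact h4.trans (he 0 _ (e.symm x 0).2)
    rw [h5]
    exact (e.symm x 0).2
  · intro i y hy
    rw [hxD, hD i y hy, Int.cast_smul_eq_zsmul]
  · rintro x' ⟨_, hx'⟩
    have h : ∀ y : L, ⁅x' - x, y⁆ = 0 := by
      intro y
      induction htop y using Submodule.iSup_induction' with
      | zero => simp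
      | add b b' _ _ h h' => rw [lie_add, h, h', add_zero]
      | mem j b hb =>
        rw [sub_lie, hx' j b hb, hxD, hD j b hb, Int.cast_smul_eq_zsmul, sub_self]
    have hc : x' - x ∈ LieAlgebra.center K L := by
      rw [LieModule.mem_maxTrivSubmodule]
      intro y
      rw [← lie_skew, h, neg_zero]
    rw [LieAlgebra.center_eq_bot, LieSubmodule.mem_bot] at hc
    exact sub_eq_zero.mp hc
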